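/- arXiv:0810.2132 — 2 statements merged into one kernel-verified Lean document; each statement's English description precedes it below -/
import Mathlib

section
/- Let n ≥ 2, let 1 ≤ p_i ≤ ∞ (i = 1,…,n) with p_n ≥ 2, and let 1 ≤ p ≤ ∞ satisfy n − 3/2 ≤ 1/p_1 + ⋯ + 1/p_n − 1/p (with the convention 1/∞ = 0). If E_1, …, E_n are Banach spaces such that E_n' has the Littlewood–Orlicz property, then every continuous n-linear form A : E_1 × ⋯ × E_n → 𝕂 is absolutely (p;p_1,…,p_n)-summing. -/
open scoped BigOperators NNReal ENNReal

/-- The weak `ℓ_r` norm of a finite family `(x_j)` in a normed space: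
`sup_{‖φ‖ ≤ 1} (∑_j ‖φ(x_j)‖^r)^(1/r)`. -/
noncomputable def weakNorm (𝕜 : Type*) [RCLike 𝕜] {E : Type*} [NormedAddCommGroup E]
    [NormedSpace 𝕜 E] (r : ℝ) {m : ℕ} (x : Fin m → E) : ℝ :=
  ⨆ φ : {φ : E →L[𝕜] 𝕜 // ‖φ‖ ≤ 1}, (∑ j, ‖φ.1 (x j)‖ ^ r) ^ (1 / r)

/-- A Banach space `X` has the Littlewood–Orlicz property: `ℓ₁ʷ(X)` embeds continuously into
`ℓ₂ ⊗_π X = ℓ₂⟨X⟩`, expressed through the Bu–Diestel duality characterization: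
`∑_j |ψ_j(x_j)| ≤ C ‖(x_j)‖_{ℓ₁ʷ(X)} ‖(ψ_j)‖_{ℓ₂ʷ(X')}` for all finite families. -/
def LittlewoodOrlicz (𝕜 : Type*) [RCLike 𝕜] (X : Type*) [NormedAddCommGroup X]
    [NormedSpace 𝕜 X] : Prop :=
  ∃ C > 0, ∀ (m : ℕ) (x : Fin m → X) (ψ : Fin m → (X →L[𝕜] 𝕜)),
    ∑ j, ‖ψ j (x j)‖ ≤ C * weakNorm 𝕜 1 x * weakNorm 𝕜 2 ψ

/-- The `ℓ_p` norm of a finite family, for an extended-real exponent `p ∈ (0, ∞]`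
(with the sup-norm interpretation when `p = ∞`). -/
noncomputable def lpNormE {F : Type*} [NormedAddCommGroup F] (p : ℝ≥0∞) {m : ℕ}
    (y : Fin m → F) : ℝ :=
  if p = ∞ then ⨆ j, ‖y j‖ else (∑ j, ‖y j‖ ^ p.toReal) ^ (1 / p.toReal)

/-- The weak `ℓ_r` norm of a finite family, for an extended-real exponent `r ∈ (0, ∞]`
(with the interpretation `max_j ‖x_j‖` when `r = ∞`). -/
noncomputable def weakNormE (𝕜 : Type*) [RCLike 𝕜] {E : Type*} [NormedAddCommGroup E]
    [NormedSpace 𝕜 E] (r : ℝ≥0∞) {m : ℕ} (x : Fin m → E) : ℝ :=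
  if r = ∞ then ⨆ j, ‖x j‖
  else ⨆ φ : {φ : E →L[𝕜] 𝕜 // ‖φ‖ ≤ 1}, (∑ j, ‖φ.1 (x j)‖ ^ r.toReal) ^ (1 / r.toReal)

/-- A continuous multilinear map is absolutely `(p; p₁, …, pₙ)`-summing, for
extended-real exponents. -/
def IsAbsSummingE {𝕜 : Type*} [RCLike 𝕜] {n : ℕ} {E : Fin n → Type*}
    [∀ i, NormedAddCommGroup (E i)] [∀ i, NormedSpace 𝕜 (E i)]
    {F : Type*} [NormedAddCommGroup F] [NormedSpace 𝕜 F]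
    (p : ℝ≥0∞) (ps : Fin n → ℝ≥0∞) (A : ContinuousMultilinearMap 𝕜 E F) : Prop :=
  ∃ C > 0, ∀ (m : ℕ) (x : ∀ i, Fin m → E i),
    lpNormE p (fun j => A (fun i => x i j)) ≤ C * ∏ i, weakNormE 𝕜 (ps i) (x i)

/-!
Averaging over signs, one variable at a time, shows that any continuous multilinear form satisfies
`∑ j, |A (x₁ j, …, xₙ j)| ≤ ‖A‖ ∏ i, ‖xᵢ‖_{ℓ₁ʷ}` (Defant–Voigt). Leaving the `l`-th variable free,
this says that the functionals `A (x₁ j, …, ·, …, xₙ j)` form a weakly summable family in the dual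
of `E l`, and the Littlewood–Orlicz inequality pairs them with a weakly `2`-summable family in
`E l`. Hence every form is absolutely `(1; 1, …, 2, …, 1)`-summing. All the other exponents follow
from this endpoint by the inclusion theorem, since
`∑ i, 1 / pᵢ - 1 / p ≥ n - 3 / 2 = ((n - 1) + 1 / 2) - 1`.
-/

section StrongNorm

open MeasureTheory

variable {F : Type*} [NormedAddCommGroup F] {m : ℕ} {p q : ℝ≥0∞}

lemma lpNormE_nonneg (p : ℝ≥0∞) (y : Fin m → F) : 0 ≤ lpNormE p y := by
  unfold lpNormE
  split_ifs
  · exact Real.iSup_nonneg fun j => norm_nonneg _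
  · positivity

lemma lpNormE_top (y : Fin m → F) : lpNormE ∞ y = ⨆ j, ‖y j‖ := if_pos rfl

lemma lpNormE_of_ne_top (hp : p ≠ ∞) (y : Fin m → F) :
    lpNormE p y = (∑ j, ‖y j‖ ^ p.toReal) ^ (1 / p.toReal) := if_neg hp

lemma lpNormE_one (y : Fin m → F) : lpNormE 1 y = ∑ j, ‖y j‖ := by
  simp [lpNormE_of_ne_top]

lemma lpNormE_mono {G : Type*} [NormedAddCommGroup G] {y : Fin m → F} {z : Fin m → G}
    (h : ∀ j, ‖y j‖ ≤ ‖z j‖) : lpNormE p y ≤ lpNormE p z := by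
  by_cases hp : p = ∞
  · subst hp
    rw [lpNormE_top, lpNormE_top]
    exact ciSup_mono (Set.finite_range _).bddAbove h
  · rw [lpNormE_of_ne_top hp, lpNormE_of_ne_top hp]
    gcongr with j
    exact h j

lemma lpNormE_eq_toReal_eLpNorm (hp : p ≠ 0) (y : Fin m → F) :
    lpNormE p y = (eLpNorm y p Measure.count).toReal := by
  by_cases hpt : p = ∞
  · subst hpt
    rw [lpNormE_top, eLpNorm_exponent_top, eLpNormEssSup_count, ENNReal.toReal_iSup (by simp)]
    simp
  · rw [lpNormE_of_ne_top hpt, eLpNorm_eq_lintegral_rpow_enorm_toReal hp hpt, lintegral_count,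
      tsum_fintype, ← ENNReal.toReal_rpow, ENNReal.toReal_sum (by finiteness)]
    simp [← ENNReal.toReal_rpow]

lemma eLpNorm_count_ne_top_of_finite {ι : Type*} [Finite ι] [MeasurableSpace ι]
    [MeasurableSingletonClass ι] (p : ℝ≥0∞) (y : ι → F) :
    eLpNorm y p Measure.count ≠ ∞ :=
  (eLpNorm_count_lt_top_of_lt fun _ => enorm_lt_top).ne

lemma norm_le_lpNormE (hp : p ≠ 0) (y : Fin m → F) (j : Fin m) : ‖y j‖ ≤ lpNormE p y := by
  rw [lpNormE_eq_toReal_eLpNorm hp, ← toReal_enorm]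
  exact ENNReal.toReal_mono (eLpNorm_count_ne_top_of_finite p y) (enorm_le_eLpNorm_count y j hp)

lemma lpNormE_smul_le {𝕜 : Type*} [NormedField 𝕜] [NormedSpace 𝕜 F] {s r : ℝ≥0∞} (hr : r ≠ 0)
    [hsqr : ENNReal.HolderTriple s q r] (c : Fin m → 𝕜) (y : Fin m → F) :
    lpNormE r (fun j => c j • y j) ≤ lpNormE s c * lpNormE q y := by
  have hs : s ≠ 0 := fun h => hr (le_zero_iff.1 (h ▸ ENNReal.HolderTriple.le s q r))
  have hq : q ≠ 0 := fun h => hr (le_zero_iff.1 (h ▸ ENNReal.HolderTriple.le q s r))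
  rw [lpNormE_eq_toReal_eLpNorm hr, lpNormE_eq_toReal_eLpNorm hs, lpNormE_eq_toReal_eLpNorm hq,
    ← ENNReal.toReal_mul]
  exact ENNReal.toReal_mono
    (ENNReal.mul_ne_top (eLpNorm_count_ne_top_of_finite s c) (eLpNorm_count_ne_top_of_finite q y))
    (eLpNorm_smul_le_mul_eLpNorm .of_discrete .of_discrete)

lemma lpNormE_rpow_inv_le_one {𝕜 : Type*} [RCLike 𝕜] (hp : p ≠ 0) {w : Fin m → ℝ}
    (hw : ∀ j, 0 ≤ w j) (hw1 : ∑ j, w j ≤ 1) :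
    lpNormE p (fun j => ((w j ^ p⁻¹.toReal : ℝ) : 𝕜)) ≤ 1 := by
  by_cases hpt : p = ∞
  · subst hpt
    simpa [lpNormE_top] using Real.iSup_le (fun _ : Fin m => le_rfl) zero_le_one
  · have hp0 : p.toReal ≠ 0 := ENNReal.toReal_ne_zero.2 ⟨hp, hpt⟩
    have hterm (j) : ‖((w j ^ p⁻¹.toReal : ℝ) : 𝕜)‖ ^ p.toReal = w j := by
      rw [RCLike.norm_ofReal, abs_of_nonneg (Real.rpow_nonneg (hw j) _), ENNReal.toReal_inv,
        Real.rpow_inv_rpow (hw j) hp0]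
    simp only [lpNormE_of_ne_top hpt, hterm]
    exact Real.rpow_le_one (Finset.sum_nonneg fun j _ => hw j) hw1 (by positivity)

lemma exists_weight_lpNormE_le_of_ne_top {t : ℝ≥0∞} (hq : q ≠ 0) (hp : p ≠ ∞)
    (ht : t + p⁻¹ ≤ q⁻¹) (y : Fin m → F) :
    ∃ w : Fin m → ℝ, (∀ j, 0 ≤ w j) ∧ ∑ j, w j ≤ 1 ∧
      lpNormE p y ≤ lpNormE q (fun j => w j ^ t.toReal * ‖y j‖) := by
  have hq' : q⁻¹ ≠ ∞ := ENNReal.inv_ne_top.2 hq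
  have hp' : p⁻¹ ≠ ∞ := ne_top_of_le_ne_top hq' (le_add_self.trans ht)
  have ht' : t ≠ ∞ := ne_top_of_le_ne_top hq' (le_self_add.trans ht)
  have hqt : q ≠ ∞ := by
    rintro rfl
    exact hp (by simpa using (le_add_self.trans ht : p⁻¹ ≤ _))
  have hP : 0 < p.toReal := ENNReal.toReal_pos (ENNReal.inv_ne_top.1 hp') hp
  have hQ : 0 < q.toReal := ENNReal.toReal_pos hq hqt
  have hexp : t.toReal + p.toReal⁻¹ ≤ q.toReal⁻¹ := by
    simpa [ENNReal.toReal_add ht' hp'] using ENNReal.toReal_mono hq' ht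
  have hN := lpNormE_nonneg p y
  set N := lpNormE p y with hNdef
  have hNsum : N ^ p.toReal = ∑ j, ‖y j‖ ^ p.toReal := by
    rw [hNdef, lpNormE_of_ne_top hp, one_div, Real.rpow_inv_rpow (by positivity) hP.ne']
  rcases hN.eq_or_lt with hN0 | hN0
  · exact ⟨0, by simp, by simp, hN0 ▸ lpNormE_nonneg _ _⟩
  set w : Fin m → ℝ := fun j => (‖y j‖ / N) ^ p.toReal with hw
  have hw0 (j) : 0 ≤ w j := by positivity
  have hw1 : ∑ j, w j = 1 := by
    simp only [hw, Real.div_rpow (norm_nonneg _) hN, ← Finset.sum_div]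
    rw [← hNsum, div_self (by positivity)]
  have hterm (j) : w j ^ q.toReal⁻¹ * N ≤ w j ^ t.toReal * ‖y j‖ := by
    have hwj1 : w j ≤ 1 := hw1 ▸ Finset.single_le_sum (fun k _ => hw0 k) (Finset.mem_univ j)
    have hy : ‖y j‖ = w j ^ p.toReal⁻¹ * N := by
      rw [hw, Real.rpow_rpow_inv (by positivity) hP.ne', div_mul_cancel₀ _ hN0.ne']
    rw [hy, ← mul_assoc, ← Real.rpow_add_of_nonneg (hw0 j) (by positivity) (by positivity)]
    gcongr ?_ * N
    exact Real.rpow_le_rpow_of_exponent_ge' (hw0 j) hwj1 (by positivity) hexp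
  refine ⟨w, hw0, hw1.le, ?_⟩
  calc N = (∑ j, (w j ^ q.toReal⁻¹ * N) ^ q.toReal) ^ (1 / q.toReal) := by
        simp only [Real.mul_rpow (Real.rpow_nonneg (hw0 _) _) hN,
          Real.rpow_inv_rpow (hw0 _) hQ.ne', ← Finset.sum_mul]
        rw [hw1, one_mul, one_div, Real.rpow_rpow_inv hN hQ.ne']
    _ ≤ lpNormE q (fun j => w j ^ t.toReal * ‖y j‖) := by
        rw [lpNormE_of_ne_top hqt]
        gcongr with j
        exact (hterm j).trans (le_abs_self _)

lemma exists_weight_lpNormE_le {t : ℝ≥0∞} (hq : q ≠ 0) (ht : t + p⁻¹ ≤ q⁻¹) (y : Fin m → F) :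
    ∃ w : Fin m → ℝ, (∀ j, 0 ≤ w j) ∧ ∑ j, w j ≤ 1 ∧
      lpNormE p y ≤ lpNormE q (fun j => w j ^ t.toReal * ‖y j‖) := by
  by_cases hp : p = ∞
  · subst hp
    rw [lpNormE_top]
    rcases isEmpty_or_nonempty (Fin m) with hm | hm
    · exact ⟨0, by simp, by simp, by simpa using lpNormE_nonneg _ _⟩
    obtain ⟨j, hj⟩ := exists_eq_ciSup_of_finite (f := fun j => ‖y j‖)
    have hsingle : (0 : Fin m → ℝ) ≤ Pi.single j 1 := Pi.single_nonneg.2 zero_le_one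
    refine ⟨Pi.single j 1, hsingle, by simp, ?_⟩
    rw [← hj]
    simpa using norm_le_lpNormE hq
      (fun k => (Pi.single j (1 : ℝ) : Fin m → ℝ) k ^ t.toReal * ‖y k‖) j
  · exact exists_weight_lpNormE_le_of_ne_top hq hp ht y

end StrongNorm

section WeakNorm

variable {𝕜 : Type*} [RCLike 𝕜] {E F : Type*} [NormedAddCommGroup E] [NormedSpace 𝕜 E]
  [NormedAddCommGroup F] [NormedSpace 𝕜 F] {m : ℕ} {r : ℝ≥0∞}

lemma weakNormE_of_ne_top (hr : r ≠ ∞) (x : Fin m → E) :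
    weakNormE 𝕜 r x = weakNorm 𝕜 r.toReal x := if_neg hr

lemma weakNormE_nonneg (r : ℝ≥0∞) (x : Fin m → E) : 0 ≤ weakNormE 𝕜 r x := by
  unfold weakNormE
  split_ifs
  · exact Real.iSup_nonneg fun j => norm_nonneg _
  · exact Real.iSup_nonneg fun φ => by positivity

lemma lpNormE_apply_le_weakNormE (r : ℝ≥0∞) (x : Fin m → E) {φ : E →L[𝕜] 𝕜} (hφ : ‖φ‖ ≤ 1) :
    lpNormE r (fun j => φ (x j)) ≤ weakNormE 𝕜 r x := by
  have hle (ψ : E →L[𝕜] 𝕜) (hψ : ‖ψ‖ ≤ 1) : lpNormE r (fun j => ψ (x j)) ≤ lpNormE r x :=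
    lpNormE_mono fun j => by simpa using ψ.le_of_opNorm_le hψ (x j)
  by_cases hr : r = ∞
  · subst hr
    exact (hle φ hφ).trans_eq (by simp [lpNormE, weakNormE])
  · simp only [lpNormE_of_ne_top hr, weakNormE, if_neg hr] at hle ⊢
    exact le_ciSup (f := fun ψ : {ψ : E →L[𝕜] 𝕜 // ‖ψ‖ ≤ 1} =>
      (∑ j, ‖ψ.1 (x j)‖ ^ r.toReal) ^ (1 / r.toReal)) ⟨_, by rintro _ ⟨ψ, rfl⟩; exact hle ψ ψ.2⟩
      ⟨φ, hφ⟩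

lemma weakNormE_le {x : Fin m → E} {B : ℝ}
    (h : ∀ φ : E →L[𝕜] 𝕜, ‖φ‖ ≤ 1 → lpNormE r (fun j => φ (x j)) ≤ B) :
    weakNormE 𝕜 r x ≤ B := by
  by_cases hr : r = ∞
  · subst hr
    have hB : 0 ≤ B := (lpNormE_nonneg _ _).trans (h 0 (by simp))
    rw [weakNormE, if_pos rfl]
    refine Real.iSup_le (fun j => ?_) hB
    obtain ⟨φ, hφ, hφx⟩ := exists_dual_vector'' 𝕜 (x j)
    calc ‖x j‖ = ‖φ (x j)‖ := by simp [hφx]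
      _ ≤ lpNormE ∞ (fun j => φ (x j)) :=
        norm_le_lpNormE ENNReal.top_ne_zero (fun j => φ (x j)) j
      _ ≤ B := h φ hφ
  · have : Nonempty {φ : E →L[𝕜] 𝕜 // ‖φ‖ ≤ 1} := ⟨⟨0, by simp⟩⟩
    rw [weakNormE, if_neg hr]
    exact ciSup_le fun φ => lpNormE_of_ne_top hr (fun j => φ.1 (x j)) ▸ h φ.1 φ.2

lemma weakNormE_smul_le {s q : ℝ≥0∞} (hr : r ≠ 0) [ENNReal.HolderTriple s q r]
    (c : Fin m → 𝕜) (x : Fin m → E) :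
    weakNormE 𝕜 r (fun j => c j • x j) ≤ lpNormE s c * weakNormE 𝕜 q x := by
  refine weakNormE_le fun φ hφ => ?_
  simp only [map_smul]
  refine (lpNormE_smul_le (s := s) (q := q) hr c fun j => φ (x j)).trans ?_
  gcongr
  · exact lpNormE_nonneg s c
  · exact lpNormE_apply_le_weakNormE q x hφ

lemma weakNormE_comp_le (r : ℝ≥0∞) {T : E →L[𝕜] F} (hT : ∀ z, ‖T z‖ ≤ ‖z‖)
    (x : Fin m → E) : weakNormE 𝕜 r (fun j => T (x j)) ≤ weakNormE 𝕜 r x :=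
  weakNormE_le fun φ hφ => lpNormE_apply_le_weakNormE r x (φ := φ.comp T) <|
    ContinuousLinearMap.opNorm_le_bound _ zero_le_one fun z =>
      (φ.le_of_opNorm_le hφ (T z)).trans (mul_le_mul_of_nonneg_left (hT z) zero_le_one)

lemma exists_sum_norm_eq_norm_sum_mul {ι : Type*} [Fintype ι] (y : ι → 𝕜) :
    ∃ c : ι → 𝕜, (∀ j, ‖c j‖ ≤ 1) ∧ ∑ j, ‖y j‖ = ‖∑ j, c j * y j‖ := by
  choose c hc hcy using fun j => RCLike.exists_norm_eq_mul_self (y j)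
  refine ⟨c, fun j => (hc j).le, ?_⟩
  rw [← Finset.sum_congr rfl fun j _ => hcy j, ← RCLike.ofReal_sum, RCLike.norm_ofReal,
    abs_of_nonneg (by positivity)]

lemma weakNormE_one_le_iff {x : Fin m → E} {B : ℝ} :
    weakNormE 𝕜 1 x ≤ B ↔ ∀ c : Fin m → 𝕜, (∀ j, ‖c j‖ ≤ 1) → ‖∑ j, c j • x j‖ ≤ B := by
  refine ⟨fun h c hc => ?_, fun h => weakNormE_le fun φ hφ => ?_⟩
  · obtain ⟨φ, hφ, hφx⟩ := exists_dual_vector'' 𝕜 (∑ j, c j • x j)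
    calc ‖∑ j, c j • x j‖ = ‖∑ j, c j * φ (x j)‖ := by
          simpa using (congrArg norm hφx).symm
      _ ≤ ∑ j, ‖φ (x j)‖ := norm_sum_le_of_le _ fun j _ => by
          simpa using mul_le_of_le_one_left (norm_nonneg _) (hc j)
      _ ≤ B := lpNormE_one (fun j => φ (x j)) ▸ (lpNormE_apply_le_weakNormE 1 x hφ).trans h
  · obtain ⟨c, hc, hcx⟩ := exists_sum_norm_eq_norm_sum_mul fun j => φ (x j)
    calc lpNormE 1 (fun j => φ (x j)) = ‖φ (∑ j, c j • x j)‖ := by simp [lpNormE_one, hcx]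
      _ ≤ ‖∑ j, c j • x j‖ := (φ.le_of_opNorm_le hφ _).trans_eq (one_mul _)
      _ ≤ B := h c hc

lemma sum_norm_apply_le (φ : E →L[𝕜] 𝕜) (x : Fin m → E) :
    ∑ j, ‖φ (x j)‖ ≤ ‖φ‖ * weakNormE 𝕜 1 x := by
  obtain ⟨c, hc, hcx⟩ := exists_sum_norm_eq_norm_sum_mul fun j => φ (x j)
  calc ∑ j, ‖φ (x j)‖ = ‖φ (∑ j, c j • x j)‖ := by simp [hcx]
    _ ≤ ‖φ‖ * weakNormE 𝕜 1 x := φ.le_opNorm_of_le (weakNormE_one_le_iff.1 le_rfl c hc)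

lemma weakNormE_one_le_of_forall_sum_norm_le {f : Fin m → E →L[𝕜] F} {K : ℝ} (hK : 0 ≤ K)
    (hf : ∀ z, ∑ j, ‖f j z‖ ≤ K * ‖z‖) : weakNormE 𝕜 1 f ≤ K := by
  refine weakNormE_one_le_iff.2 fun c hc => ContinuousLinearMap.opNorm_le_bound _ hK fun z => ?_
  calc ‖(∑ j, c j • f j) z‖ = ‖∑ j, c j • f j z‖ := by simp
    _ ≤ ∑ j, ‖f j z‖ := norm_sum_le_of_le _ fun j _ => by
        simpa [norm_smul] using mul_le_of_le_one_left (norm_nonneg _) (hc j)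
    _ ≤ K * ‖z‖ := hf z

end WeakNorm

section SignAveraging

lemma card_mul_norm_le_sum_norm_sum_units_smul {ι F : Type*} [Fintype ι] [DecidableEq ι]
    [SeminormedAddCommGroup F] [NormedSpace ℝ F] (y : ι → F) (j : ι) :
    Fintype.card (ι → ℤˣ) * ‖y j‖ ≤ ∑ ε : ι → ℤˣ, ‖∑ i, ε i • y i‖ := by
  set flip : ι → ℤˣ := Pi.mulSingle j (-1) with hflip
  have hdiff (ε : ι → ℤˣ) :
      ∑ i, ε i • y i - ∑ i, (ε * flip) i • y i = (2 : ℝ) • ε j • y j := by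
    rw [← Finset.sum_sub_distrib, Finset.sum_eq_single j]
    · simp [hflip, two_smul]
    · intro i _ hi
      simp [hflip, hi]
    · simp
  have hpair (ε : ι → ℤˣ) :
      2 * ‖y j‖ ≤ ‖∑ i, ε i • y i‖ + ‖∑ i, (ε * flip) i • y i‖ := by
    calc 2 * ‖y j‖ = ‖∑ i, ε i • y i - ∑ i, (ε * flip) i • y i‖ := by
          rw [hdiff, norm_smul, norm_units_zsmul, Real.norm_ofNat]
      _ ≤ _ := norm_sub_le _ _
  have hflipsum : ∑ ε : ι → ℤˣ, ‖∑ i, (ε * flip) i • y i‖ = ∑ ε : ι → ℤˣ, ‖∑ i, ε i • y i‖ :=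
    Equiv.sum_comp (Equiv.mulRight flip) fun ε : ι → ℤˣ => ‖∑ i, ε i • y i‖
  have hsum := Finset.sum_le_sum fun ε (_ : ε ∈ Finset.univ) => hpair ε
  rw [Finset.sum_add_distrib, hflipsum] at hsum
  simp only [Finset.sum_const, Finset.card_univ, nsmul_eq_mul] at hsum
  linarith

lemma sum_norm_apply_diag_le {𝕜 : Type*} [RCLike 𝕜] {E F : Type*} [NormedAddCommGroup E]
    [NormedSpace 𝕜 E] [NormedAddCommGroup F] [NormedSpace 𝕜 F] {m : ℕ}
    {f : Fin m → E →L[𝕜] F} {K : ℝ} (hK : 0 ≤ K) (hf : ∀ z, ∑ j, ‖f j z‖ ≤ K * ‖z‖)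
    (x : Fin m → E) : ∑ j, ‖f j (x j)‖ ≤ K * weakNormE 𝕜 1 x := by
  let : NormedSpace ℝ F := .restrictScalars ℝ 𝕜 F
  have hsign (ε : Fin m → ℤˣ) : ‖∑ i, ε i • x i‖ ≤ weakNormE 𝕜 1 x := by
    simpa [Units.smul_def, Int.cast_smul_eq_zsmul] using
      weakNormE_one_le_iff.1 le_rfl (fun i => ((ε i : ℤ) : 𝕜)) fun i => by
        rcases Int.units_eq_one_or (ε i) with h | h <;> simp [h]
  have hN : (0 : ℝ) < Fintype.card (Fin m → ℤˣ) := mod_cast Fintype.card_pos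
  refine le_of_mul_le_mul_left ?_ hN
  calc Fintype.card (Fin m → ℤˣ) * ∑ j, ‖f j (x j)‖
      ≤ ∑ j, ∑ ε : Fin m → ℤˣ, ‖∑ i, ε i • f j (x i)‖ := by
        rw [Finset.mul_sum]
        exact Finset.sum_le_sum fun j _ =>
          card_mul_norm_le_sum_norm_sum_units_smul (fun i => f j (x i)) j
    _ = ∑ ε : Fin m → ℤˣ, ∑ j, ‖f j (∑ i, ε i • x i)‖ := by
        rw [Finset.sum_comm]
        simp only [Units.smul_def, map_sum, map_zsmul]
    _ ≤ ∑ _ε : Fin m → ℤˣ, K * weakNormE 𝕜 1 x := by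
        gcongr with ε
        exact (hf _).trans (by gcongr; exact hsign ε)
    _ = Fintype.card (Fin m → ℤˣ) * (K * weakNormE 𝕜 1 x) := by simp

end SignAveraging

section DefantVoigt

variable {𝕜 : Type*} [RCLike 𝕜] {ι : Type*} [Fintype ι] [DecidableEq ι] {E : ι → Type*}
  [∀ i, NormedAddCommGroup (E i)] [∀ i, NormedSpace 𝕜 (E i)] {m : ℕ}

lemma norm_toContinuousLinearMap_le {F : Type*} [NormedAddCommGroup F]
    [NormedSpace 𝕜 F] (A : ContinuousMultilinearMap 𝕜 E F) (v : ∀ i, E i) (a : ι) :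
    ‖A.toContinuousLinearMap v a‖ ≤ ‖A‖ * ∏ i ∈ Finset.univ \ {a}, ‖v i‖ := by
  refine ContinuousLinearMap.opNorm_le_bound _ (by positivity) fun z => ?_
  calc ‖A (Function.update v a z)‖ ≤ ‖A‖ * ∏ i, ‖Function.update v a z i‖ := A.le_opNorm _
    _ = ‖A‖ * ∏ i, Function.update (fun i => ‖v i‖) a ‖z‖ i := by
        simp only [Function.apply_update fun _ => norm]
    _ = ‖A‖ * (∏ i ∈ Finset.univ \ {a}, ‖v i‖) * ‖z‖ := by
        rw [Finset.prod_update_of_mem (Finset.mem_univ a)]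
        ring

/-- The Defant–Voigt theorem, with the arguments outside `S` frozen: this is the form that survives
induction on `S`. -/
lemma sum_norm_apply_piecewise_le (A : ContinuousMultilinearMap 𝕜 E 𝕜) (x : ∀ i, Fin m → E i)
    {S : Finset ι} (hS : S.Nonempty) (v : ∀ i, E i) :
    ∑ j, ‖A (S.piecewise (fun i => x i j) v)‖ ≤
      ‖A‖ * ∏ i, S.piecewise (fun i => weakNormE 𝕜 1 (x i)) (fun i => ‖v i‖) i := by
  induction hS using Finset.Nonempty.cons_induction generalizing v with
  | singleton a =>
    simp only [Finset.piecewise_singleton, Finset.prod_update_of_mem (Finset.mem_univ a)]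
    calc ∑ j, ‖A.toContinuousLinearMap v a (x a j)‖
        ≤ ‖A.toContinuousLinearMap v a‖ * weakNormE 𝕜 1 (x a) := sum_norm_apply_le _ _
      _ ≤ (‖A‖ * ∏ i ∈ Finset.univ \ {a}, ‖v i‖) * weakNormE 𝕜 1 (x a) := by
          gcongr
          · exact weakNormE_nonneg 1 (x a)
          · exact norm_toContinuousLinearMap_le A v a
      _ = _ := by ring
  | cons a S ha _ ih =>
    set b : ι → ℝ := S.piecewise (fun i => weakNormE 𝕜 1 (x i)) (fun i => ‖v i‖) with hb
    have hb0 (i) : 0 ≤ b i := by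
      by_cases hi : i ∈ S <;> simp [hb, hi, weakNormE_nonneg]
    have hfix (z : E a) :
        ∑ j, ‖A.toContinuousLinearMap (S.piecewise (fun i => x i j) v) a z‖ ≤
          (‖A‖ * ∏ i ∈ Finset.univ \ {a}, b i) * ‖z‖ := by
      have h := ih (Function.update v a z)
      simp only [Function.apply_update fun _ => norm, ← Finset.update_piecewise_of_notMem _ _ _ ha,
        Finset.prod_update_of_mem (Finset.mem_univ a)] at h
      exact h.trans_eq (by rw [hb]; ring)
    rw [Finset.cons_eq_insert]
    simp only [Finset.piecewise_insert, Finset.prod_update_of_mem (Finset.mem_univ a)]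
    calc ∑ j, ‖A.toContinuousLinearMap (S.piecewise (fun i => x i j) v) a (x a j)‖
        ≤ (‖A‖ * ∏ i ∈ Finset.univ \ {a}, b i) * weakNormE 𝕜 1 (x a) :=
          sum_norm_apply_diag_le
            (mul_nonneg (norm_nonneg A) (Finset.prod_nonneg fun i _ => hb0 i)) hfix (x a)
      _ = _ := by ring

lemma weakNormE_toContinuousLinearMap_le [Nontrivial ι] (A : ContinuousMultilinearMap 𝕜 E 𝕜)
    (x : ∀ i, Fin m → E i) (l : ι) :
    weakNormE 𝕜 1 (fun j => A.toContinuousLinearMap (fun i => x i j) l) ≤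
      ‖A‖ * ∏ i ∈ Finset.univ \ {l}, weakNormE 𝕜 1 (x i) := by
  have hne : ({l}ᶜ : Finset ι).Nonempty := (exists_ne l).imp fun i hi => by simpa using hi
  refine weakNormE_one_le_of_forall_sum_norm_le
    (mul_nonneg (norm_nonneg A) (Finset.prod_nonneg fun i _ => weakNormE_nonneg 1 (x i)))
    fun z => ?_
  have h := sum_norm_apply_piecewise_le A x hne (Pi.single l z)
  simp only [Finset.piecewise_compl, Finset.piecewise_singleton, Pi.single_eq_same,
    Finset.prod_update_of_mem (Finset.mem_univ l)] at h
  exact h.trans_eq (by ring)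

end DefantVoigt

section Coincidence

variable {𝕜 : Type*} [RCLike 𝕜] {n : ℕ} {E : Fin n → Type*}
  [∀ i, NormedAddCommGroup (E i)] [∀ i, NormedSpace 𝕜 (E i)]

/-- The inclusion theorem. Testing on `w_j ^ (1 / r_i - 1 / p_i) • x_j^i` with weights `w` of total
mass one, Hölder's inequality absorbs the weights on the right, and on the left an extremal choice
of `w` turns the `ℓ_q` norm into the `ℓ_p` norm. -/
theorem IsAbsSummingE.of_exponents_le {F : Type*} [NormedAddCommGroup F] [NormedSpace 𝕜 F]
    {A : ContinuousMultilinearMap 𝕜 E F} {p q : ℝ≥0∞} {ps rs : Fin n → ℝ≥0∞}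
    (hA : IsAbsSummingE q rs A) (hq : q ≠ 0) (hrs : ∀ i, rs i ≠ 0) (hle : ∀ i, rs i ≤ ps i)
    (hcond : ∑ i, (rs i)⁻¹ + p⁻¹ ≤ ∑ i, (ps i)⁻¹ + q⁻¹) : IsAbsSummingE p ps A := by
  obtain ⟨C, hC, hA⟩ := hA
  refine ⟨C, hC, fun m x => ?_⟩
  set s : Fin n → ℝ≥0∞ := fun i => ((rs i)⁻¹ - (ps i)⁻¹)⁻¹ with hs
  have hsum (i) : (s i)⁻¹ + (ps i)⁻¹ = (rs i)⁻¹ := by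
    rw [hs, inv_inv, tsub_add_cancel_of_le (ENNReal.inv_le_inv.2 (hle i))]
  have hs_ne_top (i) : (s i)⁻¹ ≠ ∞ :=
    ne_top_of_le_ne_top (ENNReal.inv_ne_top.2 (hrs i)) (hsum i ▸ le_self_add)
  have hps_ne_top (i) : (ps i)⁻¹ ≠ ∞ :=
    ne_top_of_le_ne_top (ENNReal.inv_ne_top.2 (hrs i)) (hsum i ▸ le_add_self)
  have hslack : ∑ i, (s i)⁻¹ + p⁻¹ ≤ q⁻¹ := by
    rw [← Finset.sum_congr rfl fun i _ => hsum i, Finset.sum_add_distrib, add_right_comm,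
      add_comm (_ + _)] at hcond
    exact ENNReal.le_of_add_le_add_left (ENNReal.sum_ne_top.2 fun i _ => hps_ne_top i) hcond
  obtain ⟨w, hw, hw1, hwle⟩ := exists_weight_lpNormE_le hq hslack fun j => A fun i => x i j
  set c : Fin n → Fin m → 𝕜 := fun i j => ((w j ^ (s i)⁻¹.toReal : ℝ) : 𝕜)
  have hprod (j) : ‖∏ i, c i j‖ = w j ^ (∑ i, (s i)⁻¹).toReal := by
    rw [ENNReal.toReal_sum fun i _ => hs_ne_top i,
      Real.rpow_sum_of_nonneg (hw j) fun i _ => ENNReal.toReal_nonneg, norm_prod]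
    exact Finset.prod_congr rfl fun i _ => RCLike.norm_of_nonneg (Real.rpow_nonneg (hw j) _)
  have hweak (i) : weakNormE 𝕜 (rs i) (fun j => c i j • x i j) ≤ weakNormE 𝕜 (ps i) (x i) := by
    have : ENNReal.HolderTriple (s i) (ps i) (rs i) := ⟨hsum i⟩
    exact (weakNormE_smul_le (hrs i) (c i) (x i)).trans <| mul_le_of_le_one_left
      (weakNormE_nonneg _ _) (lpNormE_rpow_inv_le_one (ENNReal.inv_ne_top.1 (hs_ne_top i)) hw hw1)
  calc lpNormE p (fun j => A fun i => x i j)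
      ≤ lpNormE q (fun j => w j ^ (∑ i, (s i)⁻¹).toReal * ‖A fun i => x i j‖) := hwle
    _ ≤ lpNormE q (fun j => A fun i => c i j • x i j) := lpNormE_mono fun j => by
        rw [A.map_smul_univ (fun i => c i j) fun i => x i j, norm_smul, hprod, norm_mul, norm_norm,
          Real.norm_of_nonneg (Real.rpow_nonneg (hw j) _)]
    _ ≤ C * ∏ i, weakNormE 𝕜 (rs i) (fun j => c i j • x i j) := hA m fun i j => c i j • x i j
    _ ≤ C * ∏ i, weakNormE 𝕜 (ps i) (x i) := by
        gcongr with i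
        · exact fun i _ => weakNormE_nonneg _ _
        · exact hweak i

/-- The endpoint case: apply the Littlewood–Orlicz inequality to the functionals obtained from `A`
by fixing all arguments but the `l`-th, paired with the `l`-th arguments seen in the bidual. -/
theorem LittlewoodOrlicz.isAbsSummingE_one {l : Fin n} (hLO : LittlewoodOrlicz 𝕜 (E l →L[𝕜] 𝕜))
    [Nontrivial (Fin n)] (A : ContinuousMultilinearMap 𝕜 E 𝕜) :
    IsAbsSummingE 1 (Function.update (1 : Fin n → ℝ≥0∞) l 2) A := by
  obtain ⟨C, hC, hLO⟩ := hLO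
  refine ⟨C * (‖A‖ + 1), by positivity, fun m x => ?_⟩
  set f : Fin m → E l →L[𝕜] 𝕜 := fun j => A.toContinuousLinearMap (fun i => x i j) l
  set ψ : Fin m → (E l →L[𝕜] 𝕜) →L[𝕜] 𝕜 :=
    fun j => NormedSpace.inclusionInDoubleDual 𝕜 (E l) (x l j)
  set P := ∏ i ∈ Finset.univ \ {l}, weakNormE 𝕜 1 (x i)
  have hP : 0 ≤ P := Finset.prod_nonneg fun i _ => weakNormE_nonneg _ _
  have hprod : ∏ i, weakNormE 𝕜 (Function.update (1 : Fin n → ℝ≥0∞) l 2 i) (x i) =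
      weakNormE 𝕜 2 (x l) * P := by
    simp only [Function.apply_update fun i r => weakNormE 𝕜 r (x i),
      Finset.prod_update_of_mem (Finset.mem_univ l), Pi.one_apply, P]
  have hψ : weakNormE 𝕜 2 ψ ≤ weakNormE 𝕜 2 (x l) :=
    weakNormE_comp_le 2 (NormedSpace.double_dual_bound 𝕜 (E l)) (x l)
  have hf : weakNormE 𝕜 1 f ≤ (‖A‖ + 1) * P :=
    (weakNormE_toContinuousLinearMap_le A x l).trans (by gcongr; simp)
  have hψf (j) : ψ j (f j) = A fun i => x i j :=
    congrArg A (Function.update_eq_self l fun i => x i j)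
  calc lpNormE 1 (fun j => A fun i => x i j) = ∑ j, ‖ψ j (f j)‖ := by
        simp only [lpNormE_one, hψf]
    _ ≤ C * weakNormE 𝕜 1 f * weakNormE 𝕜 2 ψ := by
        simpa [weakNormE_of_ne_top] using hLO m f ψ
    _ ≤ C * ((‖A‖ + 1) * P) * weakNormE 𝕜 2 (x l) := by
        gcongr
        exact weakNormE_nonneg _ _
    _ = C * (‖A‖ + 1) * ∏ i, weakNormE 𝕜 (Function.update (1 : Fin n → ℝ≥0∞) l 2 i) (x i) := by
        rw [hprod]
        ring

lemma sum_inv_update_one_two (hn : 2 ≤ n) (l : Fin n) :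
    ∑ i, (Function.update (1 : Fin n → ℝ≥0∞) l 2 i)⁻¹ = ENNReal.ofReal ((n : ℝ) - 3 / 2) + 1 := by
  have hn' : (3 / 2 : ℝ) ≤ n := by
    have : (2 : ℝ) ≤ n := mod_cast hn
    linarith
  simp only [Function.apply_update fun _ (r : ℝ≥0∞) => r⁻¹, Pi.one_apply, inv_one,
    Finset.sum_update_of_mem (Finset.mem_univ l), Finset.sum_const, nsmul_one]
  rw [Finset.card_sdiff_of_subset (by simp), Finset.card_univ, Fintype.card_fin,
    Finset.card_singleton, ← ENNReal.ofReal_one, ← ENNReal.ofReal_add (by linarith) zero_le_one,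
    ← ENNReal.ofReal_natCast, Nat.cast_sub (by omega), ← ENNReal.ofReal_ofNat,
    ← ENNReal.ofReal_inv_of_pos two_pos, ← ENNReal.ofReal_add (by norm_num) (by simp; linarith)]
  congr 1
  push_cast
  ring

theorem littlewood_orlicz_coincidence_general (hn : 2 ≤ n) (l : Fin n) {ps : Fin n → ℝ≥0∞}
    (hps : ∀ i, i ≠ l → 1 ≤ ps i) (hpl : 2 ≤ ps l) {p : ℝ≥0∞}
    (hcond : ENNReal.ofReal ((n : ℝ) - 3 / 2) + 1 / p ≤ ∑ i, 1 / ps i)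
    (hLO : LittlewoodOrlicz 𝕜 (E l →L[𝕜] 𝕜)) (A : ContinuousMultilinearMap 𝕜 E 𝕜) :
    IsAbsSummingE p ps A := by
  have : Nontrivial (Fin n) := Fin.nontrivial_iff_two_le.2 hn
  have hendpoint := hLO.isAbsSummingE_one A
  refine hendpoint.of_exponents_le one_ne_zero (fun i => ?_) (fun i => ?_) ?_
  · rcases eq_or_ne i l with rfl | hi
    · simp
    · simp [Function.update_of_ne hi]
  · rcases eq_or_ne i l with rfl | hi
    · simpa using hpl
    · simpa [Function.update_of_ne hi] using hps i hi
  · simp only [one_div] at hcond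
    calc ∑ i, (Function.update (1 : Fin n → ℝ≥0∞) l 2 i)⁻¹ + p⁻¹
        = ENNReal.ofReal ((n : ℝ) - 3 / 2) + p⁻¹ + 1⁻¹ := by
          rw [sum_inv_update_one_two hn l, inv_one, add_right_comm]
      _ ≤ ∑ i, (ps i)⁻¹ + 1⁻¹ := by gcongr

end Coincidence

/-- If `n ≥ 2`, `1 ≤ p_i ≤ ∞` with `p_n ≥ 2`, `1 ≤ p ≤ ∞` and
`n − 3/2 ≤ ∑_i 1/p_i − 1/p` (stated additively), and the dual of `E_n` has the
Littlewood–Orlicz property, then every continuous `n`-linear form on `E₁ × ⋯ × E_n` is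
absolutely `(p; p₁, …, p_n)`-summing. -/
theorem littlewood_orlicz_coincidence {𝕜 : Type*} [RCLike 𝕜] {n : ℕ} (hn : 2 ≤ n)
    (E : Fin n → Type*) [∀ i, NormedAddCommGroup (E i)] [∀ i, NormedSpace 𝕜 (E i)]
    [∀ i, CompleteSpace (E i)]
    (ps : Fin n → ℝ≥0∞) (hps : ∀ i, 1 ≤ ps i)
    (hpn : 2 ≤ ps ⟨n - 1, by omega⟩)
    (p : ℝ≥0∞) (hp : 1 ≤ p)
    (hcond : ENNReal.ofReal ((n : ℝ) - 3 / 2) + 1 / p ≤ ∑ i, 1 / ps i)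
    (hLO : LittlewoodOrlicz 𝕜 (E ⟨n - 1, by omega⟩ →L[𝕜] 𝕜))
    (A : ContinuousMultilinearMap 𝕜 E 𝕜) :
    IsAbsSummingE p ps A :=
  littlewood_orlicz_coincidence_general hn _ (fun i _ => hps i) hpn hcond hLO A
end

section
/- Let E be a Banach space over 𝕂 (= ℝ or ℂ). The following are equivalent: (i) E' has the Littlewood–Orlicz property; (ii) for every Banach space X over 𝕂, every continuous bilinear form A : X × E → 𝕂 is absolutely (1;1,2)-summing. -/
open scoped BigOperators NNReal ENNReal

universe u

/-!
The dual space `E'` is a Banach space, and every bilinear form `A` on `X × E` factors through the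
evaluation pairing `E' × E → 𝕜` by `x ↦ A (x, ·)`. So every form is summing iff the pairing is, and
the point is that the Littlewood–Orlicz inequality for `ψ_j ∈ E''` follows from the one for
`y_j ∈ E`. Families with their weak `ℓ₂` norm are operators `ℓ₂^m → E` with the operator norm, and
a functional `U` on `L(H, E)` with `H` finite-dimensional is nearly nuclear: restricting operators
to a finite `δ`-net of the unit ball of `H` embeds `L(H, E)` into a finite sup-product of copies of
`E`, and Hahn–Banach followed by the duality of `ℓ_∞` and `ℓ₁` sums gives `U T = ∑ e_k (T h_k)` with
`‖h_k‖ ≤ 1` and `(1 - δ) ∑ ‖e_k‖ ≤ ‖U‖`. The right-hand side makes sense for operators into `E''`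
and obeys the same bound there.
-/

universe v

section HahnBanach

variable {𝕜 E F V ι : Type*} [RCLike 𝕜] [NormedAddCommGroup E] [NormedSpace 𝕜 E]
  [NormedAddCommGroup F] [NormedSpace 𝕜 F] [AddCommGroup V] [Module 𝕜 V] [Fintype ι]

theorem exists_strongDual_comp_eq_of_norm_le {U : Module.Dual 𝕜 V} {R : V →ₗ[𝕜] F} {M : ℝ}
    (hM : 0 ≤ M) (hU : ∀ v, ‖U v‖ ≤ M * ‖R v‖) :
    ∃ g : StrongDual 𝕜 F, ‖g‖ ≤ M ∧ ∀ v, g (R v) = U v := by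
  have hker : U ∈ R.ker.dualAnnihilator := by
    refine (Submodule.mem_dualAnnihilator U).2 fun v hv ↦ norm_le_zero_iff.1 ?_
    simpa only [LinearMap.mem_ker.1 hv, norm_zero, mul_zero] using hU v
  rw [← R.range_dualMap_eq_dualAnnihilator_ker] at hker
  obtain ⟨f, rfl⟩ := hker
  let fRange : StrongDual 𝕜 R.range := (f.domRestrict R.range).mkContinuous M <| by
    rintro ⟨_, v, rfl⟩
    exact hU v
  obtain ⟨g, hg, hg_norm⟩ := exists_extension_norm_eq R.range fRange
  exact ⟨g, hg_norm.trans_le (LinearMap.mkContinuous_norm_le _ hM _),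
    fun v ↦ hg ⟨R v, v, rfl⟩⟩

theorem le_of_forall_pos_lt_one_mul_le {a b : ℝ} (h : ∀ t, 0 < t → t < 1 → t * a ≤ b) :
    a ≤ b := by
  have htendsto : Filter.Tendsto (fun t : ℝ ↦ t * a) (nhdsWithin 1 (Set.Iio 1)) (nhds a) := by
    simpa only [one_mul] using
      ((continuous_mul_const a).tendsto (1 : ℝ)).mono_left nhdsWithin_le_nhds
  refine le_of_tendsto htendsto ?_
  filter_upwards [Ioo_mem_nhdsLT (zero_lt_one (α := ℝ))] with t ht using h t ht.1 ht.2

theorem exists_norm_le_one_mul_opNorm_le_re (f : StrongDual 𝕜 E) {t : ℝ} (ht : t < 1) :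
    ∃ v, ‖v‖ ≤ 1 ∧ t * ‖f‖ ≤ RCLike.re (f v) := by
  rcases eq_or_ne f 0 with rfl | hf
  · exact ⟨0, by simp⟩
  obtain ⟨v, hv, hfv⟩ := f.exists_lt_apply_of_lt_opNorm
    (mul_lt_of_lt_one_left (norm_pos_iff.2 hf) ht)
  obtain ⟨c, hc, hcv⟩ := RCLike.exists_norm_eq_mul_self (f v)
  refine ⟨c • v, by rw [norm_smul, hc, one_mul]; exact hv.le, ?_⟩
  rw [map_smul, smul_eq_mul, ← hcv, RCLike.ofReal_re]
  exact hfv.le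

theorem sum_opNorm_comp_single_le [DecidableEq ι] {G : ι → Type*} [∀ i, NormedAddCommGroup (G i)]
    [∀ i, NormedSpace 𝕜 (G i)] (g : StrongDual 𝕜 (∀ i, G i)) :
    ∑ i, ‖g ∘L ContinuousLinearMap.single 𝕜 G i‖ ≤ ‖g‖ := by
  refine le_of_forall_pos_lt_one_mul_le fun t _ ht ↦ ?_
  choose v hv hgv using fun i ↦
    exists_norm_le_one_mul_opNorm_le_re (g ∘L ContinuousLinearMap.single 𝕜 G i) ht
  calc t * ∑ i, ‖g ∘L ContinuousLinearMap.single 𝕜 G i‖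
      ≤ ∑ i, RCLike.re (g (Pi.single i (v i))) := by
        rw [Finset.mul_sum]
        exact Finset.sum_le_sum fun i _ ↦ hgv i
    _ = RCLike.re (g v) := by rw [← map_sum, ← map_sum, Finset.univ_sum_single]
    _ ≤ ‖g v‖ := RCLike.re_le_norm _
    _ ≤ ‖g‖ := g.unit_le_opNorm v ((pi_norm_le_iff_of_nonneg zero_le_one).2 hv)

end HahnBanach

section FunctionalsOnOperators

variable {𝕜 E H : Type*} [RCLike 𝕜] [NormedAddCommGroup E] [NormedSpace 𝕜 E]
  [NormedAddCommGroup H] [NormedSpace 𝕜 H]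

theorem one_sub_mul_opNorm_le_of_isCover {δ : ℝ≥0} {N : Set H}
    (hN : Metric.IsCover δ (Metric.closedBall 0 1) N) (T : H →L[𝕜] E) {M : ℝ}
    (hM : ∀ h ∈ N, ‖T h‖ ≤ M) : (1 - δ) * ‖T‖ ≤ M := by
  suffices ‖T‖ ≤ M + ‖T‖ * δ by linarith
  refine le_of_forall_lt fun r hr ↦ ?_
  obtain ⟨h, hh, hrT⟩ := T.exists_lt_apply_of_lt_opNorm hr
  obtain ⟨k, hk, hhk⟩ := hN (mem_closedBall_zero_iff.2 hh.le)
  have hdist : ‖h - k‖ ≤ δ := by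
    rw [← dist_eq_norm, dist_nndist]
    exact_mod_cast (edist_nndist h k).symm.trans_le hhk
  calc r < ‖T h‖ := hrT
    _ = ‖T k + T (h - k)‖ := by rw [← map_add, add_sub_cancel]
    _ ≤ M + ‖T‖ * δ := norm_add_le_of_le (hM k hk) (T.le_opNorm_of_le hdist)

theorem exists_sum_apply_eq_of_strongDual_clm [ProperSpace H] (U : StrongDual 𝕜 (H →L[𝕜] E))
    {t : ℝ} (ht₀ : 0 < t) (ht₁ : t < 1) :
    ∃ (N : Finset H) (e : N → StrongDual 𝕜 E), (∀ h ∈ N, ‖h‖ ≤ 1) ∧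
      (∀ T, U T = ∑ h, e h (T h)) ∧ t * ∑ h, ‖e h‖ ≤ ‖U‖ := by
  classical
  obtain ⟨δ, hδt⟩ : ∃ δ : ℝ≥0, (δ : ℝ) = 1 - t := ⟨⟨1 - t, (sub_pos.2 ht₁).le⟩, rfl⟩
  have hδ : δ ≠ 0 := NNReal.coe_ne_zero.1 (hδt ▸ (sub_pos.2 ht₁).ne')
  obtain ⟨N, hN, hfin, hcover⟩ :=
    Metric.exists_finite_isCover_of_isCompact hδ (isCompact_closedBall (0 : H) 1)
  lift N to Finset H using hfin
  let R : (H →L[𝕜] E) →ₗ[𝕜] (N → E) :=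
    LinearMap.pi fun h ↦ (ContinuousLinearMap.apply 𝕜 E (h : H)).toLinearMap
  have hR (T : H →L[𝕜] E) : t * ‖T‖ ≤ ‖R T‖ := by
    have := one_sub_mul_opNorm_le_of_isCover hcover T fun h hh ↦ norm_le_pi_norm (R T) ⟨h, hh⟩
    rwa [hδt, sub_sub_cancel] at this
  have hUR (T : H →L[𝕜] E) : ‖U.toLinearMap T‖ ≤ ‖U‖ / t * ‖R T‖ := by
    rw [div_mul_eq_mul_div, le_div_iff₀ ht₀, mul_comm _ t]
    calc t * ‖U T‖ ≤ t * (‖U‖ * ‖T‖) := by gcongr; exact U.le_opNorm T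
      _ = ‖U‖ * (t * ‖T‖) := by ring
      _ ≤ ‖U‖ * ‖R T‖ := by gcongr; exact hR T
  obtain ⟨g, hg, hgR⟩ := exists_strongDual_comp_eq_of_norm_le (by positivity) hUR
  refine ⟨N, fun h ↦ g ∘L ContinuousLinearMap.single 𝕜 (fun _ ↦ E) h,
    fun h hh ↦ mem_closedBall_zero_iff.1 (hN hh), fun T ↦ ?_, ?_⟩
  · calc U T = g (∑ h, Pi.single h (R T h)) := by rw [Finset.univ_sum_single]; exact (hgR T).symm
      _ = _ := map_sum _ _ _
  · rw [mul_comm, ← le_div_iff₀ ht₀]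
    exact (sum_opNorm_comp_single_le g).trans hg

end FunctionalsOnOperators

section WeakNorm

variable {𝕜 E F : Type*} [RCLike 𝕜] [NormedAddCommGroup E] [NormedSpace 𝕜 E]
  [NormedAddCommGroup F] [NormedSpace 𝕜 F] {r : ℝ} {m : ℕ}

theorem weakNorm_nonneg (r : ℝ) (x : Fin m → E) : 0 ≤ weakNorm 𝕜 r x :=
  Real.iSup_nonneg fun _ ↦ by positivity

theorem weakNorm_le {x : Fin m → E} {M : ℝ}
    (h : ∀ φ : StrongDual 𝕜 E, ‖φ‖ ≤ 1 → (∑ j, ‖φ (x j)‖ ^ r) ^ (1 / r) ≤ M) :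
    weakNorm 𝕜 r x ≤ M :=
  have : Nonempty {φ : StrongDual 𝕜 E // ‖φ‖ ≤ 1} := ⟨0, by simp⟩
  ciSup_le fun φ ↦ h φ.1 φ.2

theorem le_weakNorm (hr : 0 < r) (x : Fin m → E) {φ : StrongDual 𝕜 E} (hφ : ‖φ‖ ≤ 1) :
    (∑ j, ‖φ (x j)‖ ^ r) ^ (1 / r) ≤ weakNorm 𝕜 r x := by
  refine le_ciSup (f := fun φ : {φ : StrongDual 𝕜 E // ‖φ‖ ≤ 1} ↦
    (∑ j, ‖φ.1 (x j)‖ ^ r) ^ (1 / r)) ⟨(∑ j, ‖x j‖ ^ r) ^ (1 / r), ?_⟩ ⟨φ, hφ⟩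
  rintro _ ⟨ψ, rfl⟩
  dsimp only
  gcongr with j
  simpa only [one_mul] using ψ.1.le_of_opNorm_le ψ.2 (x j)

theorem sum_mul_rpow_rpow_one_div (hr : 0 < r) {c : ℝ} (hc : 0 ≤ c) {ι : Type*} (s : Finset ι)
    {a : ι → ℝ} (ha : ∀ i, 0 ≤ a i) :
    (∑ i ∈ s, (c * a i) ^ r) ^ (1 / r) = c * (∑ i ∈ s, a i ^ r) ^ (1 / r) := by
  have hsum : 0 ≤ ∑ i ∈ s, a i ^ r := Finset.sum_nonneg fun i _ ↦ Real.rpow_nonneg (ha i) r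
  simp_rw [fun i ↦ Real.mul_rpow (z := r) hc (ha i)]
  rw [← Finset.mul_sum, Real.mul_rpow (Real.rpow_nonneg hc r) hsum, one_div,
    Real.rpow_rpow_inv hc hr.ne']

theorem le_opNorm_mul_weakNorm (hr : 0 < r) (x : Fin m → E) (φ : StrongDual 𝕜 E) :
    (∑ j, ‖φ (x j)‖ ^ r) ^ (1 / r) ≤ ‖φ‖ * weakNorm 𝕜 r x := by
  let φ₁ : StrongDual 𝕜 E := ((‖φ‖⁻¹ : ℝ) : 𝕜) • φ
  have hφ₁ : ‖φ₁‖ ≤ 1 := by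
    rw [norm_smul, RCLike.norm_ofReal, abs_inv, abs_norm]
    exact inv_mul_le_one
  have hφ (j : Fin m) : ‖φ (x j)‖ = ‖φ‖ * ‖φ₁ (x j)‖ := by
    rcases eq_or_ne φ 0 with rfl | hφ0
    · simp
    · simp [φ₁, mul_inv_cancel_left₀ (norm_ne_zero_iff.2 hφ0)]
  simp_rw [hφ]
  rw [sum_mul_rpow_rpow_one_div hr (norm_nonneg φ) _ fun _ ↦ norm_nonneg _]
  gcongr
  exact le_weakNorm hr x hφ₁

theorem weakNorm_comp_le (hr : 0 < r) (T : E →L[𝕜] F) (x : Fin m → E) :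
    weakNorm 𝕜 r (fun j ↦ T (x j)) ≤ ‖T‖ * weakNorm 𝕜 r x := by
  refine weakNorm_le fun φ hφ ↦ (le_opNorm_mul_weakNorm hr x (φ ∘L T)).trans ?_
  gcongr
  · exact weakNorm_nonneg r x
  · exact (φ.opNorm_comp_le T).trans (mul_le_of_le_one_left (norm_nonneg T) hφ)

theorem weakNorm_inclusionInDoubleDual_le (hr : 0 < r) (x : Fin m → E) :
    weakNorm 𝕜 r (fun j ↦ NormedSpace.inclusionInDoubleDual 𝕜 E (x j)) ≤ weakNorm 𝕜 r x := by
  have hcomp := weakNorm_comp_le (𝕜 := 𝕜) (F := StrongDual 𝕜 (StrongDual 𝕜 E)) hr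
    (NormedSpace.inclusionInDoubleDual 𝕜 E) x
  have hnorm := mul_le_of_le_one_left (weakNorm_nonneg (𝕜 := 𝕜) r x)
    (NormedSpace.inclusionInDoubleDual_norm_le 𝕜 E)
  exact hcomp.trans hnorm

end WeakNorm

section Synthesis

variable {𝕜 E ι : Type*} [RCLike 𝕜] [NormedAddCommGroup E] [NormedSpace 𝕜 E] [Fintype ι]

variable (𝕜) in
/-- The synthesis operator `h ↦ ∑ j, h j • y j` from `ℓ₂` to `E` of a finite family `y`, which
identifies families in `E` under the weak `ℓ₂` norm with operators under the operator norm. -/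
noncomputable def synthesis (y : ι → E) : EuclideanSpace 𝕜 ι →L[𝕜] E :=
  (EuclideanSpace.basisFun ι 𝕜).toBasis.constrL y

theorem synthesis_apply (y : ι → E) (h : EuclideanSpace 𝕜 ι) :
    synthesis 𝕜 y h = ∑ j, h j • y j := by
  simp [synthesis, Module.Basis.constrL_apply]

theorem synthesis_comp_single [DecidableEq ι] (T : EuclideanSpace 𝕜 ι →L[𝕜] E) :
    synthesis 𝕜 (fun j ↦ T (EuclideanSpace.single j 1)) = T := by
  refine ContinuousLinearMap.coe_injective
    ((EuclideanSpace.basisFun ι 𝕜).toBasis.ext fun j ↦ ?_)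
  simp [synthesis_apply]

theorem opNorm_comp_synthesis (φ : StrongDual 𝕜 E) (y : ι → E) :
    ‖φ ∘L synthesis 𝕜 y‖ = (∑ j, ‖φ (y j)‖ ^ (2 : ℝ)) ^ (1 / (2 : ℝ)) := by
  let v : EuclideanSpace 𝕜 ι := WithLp.toLp 2 fun j ↦ star (φ (y j))
  have hv : φ ∘L synthesis 𝕜 y = innerSL 𝕜 v := by
    ext h
    simp [v, synthesis_apply, PiLp.inner_apply]
  rw [hv, innerSL_apply_norm, EuclideanSpace.norm_eq, Real.sqrt_eq_rpow]
  simp [v]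

theorem weakNorm_two_eq_opNorm_synthesis {m : ℕ} (y : Fin m → E) :
    weakNorm 𝕜 2 y = ‖synthesis 𝕜 y‖ := by
  refine le_antisymm (weakNorm_le fun φ hφ ↦ ?_)
    ((synthesis 𝕜 y).opNorm_le_bound (weakNorm_nonneg 2 y) fun h ↦ ?_)
  · rw [← opNorm_comp_synthesis]
    exact (φ.opNorm_comp_le _).trans (mul_le_of_le_one_left (norm_nonneg _) hφ)
  · obtain ⟨φ, hφ, hφh⟩ := exists_dual_vector'' 𝕜 (synthesis 𝕜 y h)
    calc ‖synthesis 𝕜 y h‖ = ‖(φ ∘L synthesis 𝕜 y) h‖ := by simp [hφh]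
      _ ≤ ‖φ ∘L synthesis 𝕜 y‖ * ‖h‖ := ContinuousLinearMap.le_opNorm _ _
      _ ≤ weakNorm 𝕜 2 y * ‖h‖ := by
        rw [opNorm_comp_synthesis]
        gcongr
        exact le_weakNorm two_pos y hφ

end Synthesis

section Bidual

variable {𝕜 E : Type*} [RCLike 𝕜] [NormedAddCommGroup E] [NormedSpace 𝕜 E] {m : ℕ}
  {u : Fin m → StrongDual 𝕜 E} {s : ℝ}

theorem exists_eq_sum_smul_of_norm_sum_apply_le (hs : 0 ≤ s)
    (hu : ∀ y : Fin m → E, ‖∑ j, u j (y j)‖ ≤ s * weakNorm 𝕜 2 y)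
    {t : ℝ} (ht₀ : 0 < t) (ht₁ : t < 1) :
    ∃ (N : Finset (EuclideanSpace 𝕜 (Fin m))) (e : N → StrongDual 𝕜 E),
      (∀ h ∈ N, ‖h‖ ≤ 1) ∧ (∀ j, u j = ∑ h, h.1 j • e h) ∧ t * ∑ h, ‖e h‖ ≤ s := by
  let U : StrongDual 𝕜 (EuclideanSpace 𝕜 (Fin m) →L[𝕜] E) :=
    ∑ j, u j ∘L ContinuousLinearMap.apply 𝕜 E (EuclideanSpace.single j 1)
  have hU_apply (T : EuclideanSpace 𝕜 (Fin m) →L[𝕜] E) :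
      U T = ∑ j, u j (T (EuclideanSpace.single j 1)) := by
    simp [U]
  have hU_norm : ‖U‖ ≤ s := U.opNorm_le_bound hs fun T ↦ by
    rw [hU_apply]
    refine (hu _).trans_eq ?_
    rw [weakNorm_two_eq_opNorm_synthesis, synthesis_comp_single]
  obtain ⟨N, e, hN, hUe, he⟩ := exists_sum_apply_eq_of_strongDual_clm U ht₀ ht₁
  refine ⟨N, e, hN, fun j ↦ ContinuousLinearMap.ext fun v ↦ ?_, he.trans hU_norm⟩
  have hUv : U ((EuclideanSpace.proj j).smulRight v) = u j v := by
    rw [hU_apply, Finset.sum_eq_single j] <;> simp +contextual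
  rw [← hUv, hUe]
  simp

theorem norm_sum_apply_bidual_le (hs : 0 ≤ s)
    (hu : ∀ y : Fin m → E, ‖∑ j, u j (y j)‖ ≤ s * weakNorm 𝕜 2 y)
    (ψ : Fin m → StrongDual 𝕜 (StrongDual 𝕜 E)) :
    ‖∑ j, ψ j (u j)‖ ≤ s * weakNorm 𝕜 2 ψ := by
  refine le_of_forall_pos_lt_one_mul_le fun t ht₀ ht₁ ↦ ?_
  obtain ⟨N, e, hN, hue, he⟩ := exists_eq_sum_smul_of_norm_sum_apply_le hs hu ht₀ ht₁
  have hsum : ∑ j, ψ j (u j) = ∑ h, synthesis 𝕜 ψ h.1 (e h) := by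
    simp only [hue, map_sum, map_smul, synthesis_apply, sum_apply, smul_apply]
    exact Finset.sum_comm
  have hψ (h : N) : ‖synthesis 𝕜 ψ h.1‖ ≤ weakNorm 𝕜 2 ψ := by
    rw [weakNorm_two_eq_opNorm_synthesis]
    exact (synthesis 𝕜 ψ).unit_le_opNorm h.1 (hN h.1 h.2)
  calc t * ‖∑ j, ψ j (u j)‖
      ≤ t * ∑ h, weakNorm 𝕜 2 ψ * ‖e h‖ := by
        rw [hsum]
        gcongr
        exact norm_sum_le_of_le _ fun h _ ↦ (synthesis 𝕜 ψ h.1).le_of_opNorm_le (hψ h) (e h)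
    _ = (t * ∑ h, ‖e h‖) * weakNorm 𝕜 2 ψ := by rw [← Finset.mul_sum]; ring
    _ ≤ s * weakNorm 𝕜 2 ψ := mul_le_mul_of_nonneg_right he (weakNorm_nonneg 2 ψ)

theorem sum_norm_apply_bidual_le (hs : 0 ≤ s)
    (hu : ∀ y : Fin m → E, ∑ j, ‖u j (y j)‖ ≤ s * weakNorm 𝕜 2 y)
    (ψ : Fin m → StrongDual 𝕜 (StrongDual 𝕜 E)) :
    ∑ j, ‖ψ j (u j)‖ ≤ s * weakNorm 𝕜 2 ψ := by
  choose c hc hcψ using fun j ↦ RCLike.exists_norm_eq_mul_self (ψ j (u j))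
  have hcu (y : Fin m → E) : ‖∑ j, (c j • u j) (y j)‖ ≤ s * weakNorm 𝕜 2 y := by
    refine (norm_sum_le _ _).trans (le_of_eq_of_le ?_ (hu y))
    simp [hc]
  calc ∑ j, ‖ψ j (u j)‖ = ‖∑ j, ψ j (c j • u j)‖ := by
        simp only [map_smul, smul_eq_mul, ← hcψ, ← RCLike.ofReal_sum, RCLike.norm_ofReal]
        exact (abs_of_nonneg (by positivity)).symm
    _ ≤ s * weakNorm 𝕜 2 ψ := norm_sum_apply_bidual_le hs hcu ψ

end Bidual

section Summing

variable {𝕜 X Y E : Type*} [RCLike 𝕜] [NormedAddCommGroup X] [NormedSpace 𝕜 X]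
  [NormedAddCommGroup Y] [NormedSpace 𝕜 Y] [NormedAddCommGroup E] [NormedSpace 𝕜 E]

/-- The absolutely `(1; 1, 2)`-summing bilinear forms on `X × E`, the form being encoded as an
operator `X → E'`. -/
def IsAbsolutelySumming (A : X →L[𝕜] E →L[𝕜] 𝕜) : Prop :=
  ∃ C > 0, ∀ (m : ℕ) (x : Fin m → X) (y : Fin m → E),
    ∑ j, ‖A (x j) (y j)‖ ≤ C * weakNorm 𝕜 1 x * weakNorm 𝕜 2 y

theorem IsAbsolutelySumming.comp {A : Y →L[𝕜] E →L[𝕜] 𝕜} (hA : IsAbsolutelySumming A)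
    (T : X →L[𝕜] Y) : IsAbsolutelySumming (A ∘L T) := by
  obtain ⟨C, hC, hA⟩ := hA
  -- `‖T‖ + 1` keeps the constant positive when `T = 0`
  refine ⟨C * (‖T‖ + 1), by positivity, fun m x y ↦ ?_⟩
  have hT : weakNorm 𝕜 1 (fun j ↦ T (x j)) ≤ (‖T‖ + 1) * weakNorm 𝕜 1 x :=
    (weakNorm_comp_le one_pos T x).trans
      (mul_le_mul_of_nonneg_right (le_add_of_nonneg_right zero_le_one) (weakNorm_nonneg 1 x))
  calc ∑ j, ‖(A ∘L T) (x j) (y j)‖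
      ≤ C * weakNorm 𝕜 1 (fun j ↦ T (x j)) * weakNorm 𝕜 2 y := hA m (fun j ↦ T (x j)) y
    _ ≤ C * ((‖T‖ + 1) * weakNorm 𝕜 1 x) * weakNorm 𝕜 2 y :=
      mul_le_mul_of_nonneg_right (mul_le_mul_of_nonneg_left hT hC.le) (weakNorm_nonneg 2 y)
    _ = C * (‖T‖ + 1) * weakNorm 𝕜 1 x * weakNorm 𝕜 2 y := by ring

theorem littlewoodOrlicz_strongDual_iff_isAbsolutelySumming_id :
    LittlewoodOrlicz 𝕜 (StrongDual 𝕜 E) ↔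
      IsAbsolutelySumming (ContinuousLinearMap.id 𝕜 (StrongDual 𝕜 E)) := by
  constructor
  · rintro ⟨C, hC, hLO⟩
    refine ⟨C, hC, fun m x y ↦ ?_⟩
    have hJ := weakNorm_inclusionInDoubleDual_le (𝕜 := 𝕜) two_pos y
    exact (hLO m x fun j ↦ NormedSpace.inclusionInDoubleDual 𝕜 E (y j)).trans
      (mul_le_mul_of_nonneg_left hJ (mul_nonneg hC.le (weakNorm_nonneg 1 x)))
  · rintro ⟨C, hC, hid⟩
    exact ⟨C, hC, fun m x ↦
      sum_norm_apply_bidual_le (mul_nonneg hC.le (weakNorm_nonneg 1 x)) (hid m x)⟩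

end Summing

theorem littlewood_orlicz_iff_general {𝕜 : Type v} [RCLike 𝕜]
    (E : Type u) [NormedAddCommGroup E] [NormedSpace 𝕜 E] :
    LittlewoodOrlicz 𝕜 (E →L[𝕜] 𝕜) ↔
      ∀ (X : Type (max u v)) [NormedAddCommGroup X] [NormedSpace 𝕜 X] [CompleteSpace X],
        ∀ A : X →L[𝕜] E →L[𝕜] 𝕜, IsAbsolutelySumming A := by
  rw [littlewoodOrlicz_strongDual_iff_isAbsolutelySumming_id]
  constructor
  · intro hid X _ _ _ A
    simpa only [ContinuousLinearMap.id_comp] using hid.comp A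
  · intro hA
    exact hA (StrongDual 𝕜 E) (ContinuousLinearMap.id 𝕜 (StrongDual 𝕜 E))

/-- `E'` has the Littlewood–Orlicz property iff for every Banach space `X`, every continuous
bilinear form on `X × E` is absolutely `(1; 1, 2)`-summing. -/
theorem littlewood_orlicz_iff {𝕜 : Type u} [RCLike 𝕜]
    (E : Type u) [NormedAddCommGroup E] [NormedSpace 𝕜 E] [CompleteSpace E] :
    LittlewoodOrlicz 𝕜 (E →L[𝕜] 𝕜) ↔
      ∀ (X : Type u) [NormedAddCommGroup X] [NormedSpace 𝕜 X] [CompleteSpace X],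
        ∀ A : X →L[𝕜] E →L[𝕜] 𝕜, ∃ C > 0,
          ∀ (m : ℕ) (x : Fin m → X) (y : Fin m → E),
            ∑ j, ‖A (x j) (y j)‖ ≤ C * weakNorm 𝕜 1 x * weakNorm 𝕜 2 y :=
  littlewood_orlicz_iff_general E
end
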